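/- For k₊ = (√6+√2)/4, the complete elliptic integral of the second kind satisfies E(k₊) = 2^(1/3)·3^(-1/4)·π²·Γ(1/3)^(-3) + 2^(-10/3)·3^(1/4)·π^(-1)·(√3 - 1)·Γ(1/3)³. -/

import Mathlib

open Real MeasureTheory

/-- The complete elliptic integral of the second kind,
`E(k) = ∫₀^{π/2} √(1 - k² sin²θ) dθ`. -/
noncomputable def ellipticE (k : ℝ) : ℝ :=
  ∫ θ in (0:ℝ)..(π/2), Real.sqrt (1 - k^2 * Real.sin θ ^ 2)

open ProbabilityTheory Set Filter Topology

lemma aux_beta (a b : ℝ) (ha : 0 < a) (hb : 0 < b) :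
    ∫ x in Ioo (0:ℝ) 1, x ^ (a - 1) * (1 - x) ^ (b - 1) = beta a b := by
  rw [beta_eq_betaIntegralReal a b ha hb, Complex.betaIntegral,
    intervalIntegral.integral_of_le zero_le_one, integral_Ioc_eq_integral_Ioo]
  have : ∫ x in Ioo (0:ℝ) 1, (x:ℂ) ^ ((a:ℂ) - 1) * (1 - (x:ℂ)) ^ ((b:ℂ) - 1)
      = ∫ x in Ioo (0:ℝ) 1, (((x ^ (a - 1) * (1 - x) ^ (b - 1) : ℝ)) : ℂ) := by
    refine setIntegral_congr_fun measurableSet_Ioo fun x hx => ?_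
    have h1 : 0 ≤ 1 - x := by linarith [hx.2]
    rw [Complex.ofReal_mul, Complex.ofReal_cpow hx.1.le, Complex.ofReal_cpow h1]
    push_cast
    rfl
  rw [this, integral_complex_ofReal, Complex.ofReal_re]

lemma aux_L1 (m : ℕ) :
    ∫ u in Ioo (0:ℝ) 1, (1 - u) ^ m / √(1 - (1 - u) ^ 3) = beta ((m + 1) / 3) (1 / 2) / 3 := by
  have himg : (fun u : ℝ => (1 - u) ^ 3) '' Ioo 0 1 = Ioo 0 1 := by
    ext y
    constructor
    · rintro ⟨u, hu, rfl⟩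
      have h0 : 0 < 1 - u := by linarith [hu.2]
      exact ⟨by positivity, pow_lt_one₀ h0.le (by linarith [hu.1]) (by norm_num)⟩
    · intro hy
      refine ⟨1 - y ^ ((1:ℝ) / 3), ⟨?_, ?_⟩, ?_⟩
      · have := rpow_lt_one hy.1.le hy.2 (z := (1:ℝ) / 3) (by norm_num)
        linarith
      · have := rpow_pos_of_pos hy.1 ((1:ℝ) / 3)
        linarith
      · simp only [sub_sub_cancel]
        rw [← rpow_natCast, ← rpow_mul hy.1.le]
        norm_num
  have hinj : InjOn (fun u : ℝ => (1 - u) ^ 3) (Ioo 0 1) := by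
    intro u hu v hv h
    have := (pow_left_inj₀ (a := 1 - u) (b := 1 - v) (by linarith [hu.2]) (by linarith [hv.2])
      (n := 3) (by norm_num)).1 h
    linarith
  have key := integral_image_eq_integral_abs_deriv_smul (f := fun u : ℝ => (1 - u) ^ 3)
    (f' := fun u => -3 * (1 - u) ^ 2) (s := Ioo 0 1) measurableSet_Ioo
    (fun u _ => by
      have := (((hasDerivAt_id u).const_sub 1).pow 3).hasDerivWithinAt (s := Ioo 0 1)
      convert! this using 1
      simp) hinj (fun x => x ^ (((m:ℝ) + 1) / 3 - 1) * (1 - x) ^ ((1:ℝ) / 2 - 1))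
  rw [himg, aux_beta _ _ (by positivity) (by norm_num)] at key
  rw [key, eq_div_iff (by norm_num), mul_comm, ← integral_const_mul]
  refine setIntegral_congr_fun measurableSet_Ioo fun u hu => ?_
  have h0 : 0 < 1 - u := by linarith [hu.2]
  have h1 : (1 - u) ^ 3 < 1 := pow_lt_one₀ h0.le (by linarith [hu.1]) (by norm_num)
  have h2 : 0 < 1 - (1 - u) ^ 3 := by linarith
  have e1 : (1 - (1 - u) ^ 3) ^ ((1:ℝ) / 2 - 1) = (√(1 - (1 - u) ^ 3))⁻¹ := by
    rw [sqrt_eq_rpow, ← rpow_neg h2.le]; norm_num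
  have e2 : ((1 - u) ^ 3) ^ (((m:ℝ) + 1) / 3 - 1) = (1 - u) ^ m / (1 - u) ^ 2 := by
    rw [← rpow_natCast, ← rpow_mul h0.le, ← rpow_natCast, ← rpow_natCast, ← rpow_sub h0]
    congr 1; push_cast; ring
  simp only [smul_eq_mul]
  rw [e1, e2, abs_of_nonpos (by nlinarith [sq_nonneg (1 - u)])]
  have : (1 - u) ≠ 0 := h0.ne'
  field_simp

lemma aux_L2 (m : ℕ) (b : ℝ) (hb : 0 < b) :
    ∫ u in Ioi (1:ℝ), (u - 1) ^ m * (1 + (u - 1) ^ 3) ^ (-((m + 1) / 3 + b))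
      = beta ((m + 1) / 3) b / 3 := by
  have himg : (fun u : ℝ => (u - 1) ^ 3 / (1 + (u - 1) ^ 3)) '' Ioi 1 = Ioo 0 1 := by
    ext y
    constructor
    · rintro ⟨u, hu, rfl⟩
      have h0 : 0 < u - 1 := by linarith [mem_Ioi.1 hu]
      refine ⟨by positivity, ?_⟩
      simp only []
      rw [div_lt_one (by positivity)]; linarith
    · intro hy
      have h1 : 0 < 1 - y := by linarith [hy.2]
      have h2 : 0 < y / (1 - y) := div_pos hy.1 h1
      refine ⟨1 + (y / (1 - y)) ^ ((1:ℝ) / 3), ?_, ?_⟩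
      · have := rpow_pos_of_pos h2 ((1:ℝ) / 3)
        simpa using this
      · have : ((y / (1 - y)) ^ ((1:ℝ) / 3)) ^ 3 = y / (1 - y) := by
          rw [← rpow_natCast, ← rpow_mul h2.le]
          norm_num
        simp only [add_sub_cancel_left]
        rw [this]
        field_simp
        ring
  have hinj : InjOn (fun u : ℝ => (u - 1) ^ 3 / (1 + (u - 1) ^ 3)) (Ioi 1) := by
    intro u hu v hv h
    have hu0 : 0 < u - 1 := by linarith [mem_Ioi.1 hu]
    have hv0 : 0 < v - 1 := by linarith [mem_Ioi.1 hv]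
    simp only [] at h
    rw [div_eq_div_iff (by positivity) (by positivity)] at h
    have := (pow_left_inj₀ (a := u - 1) (b := v - 1) hu0.le hv0.le
      (n := 3) (by norm_num)).1 (by linarith)
    linarith
  have key := integral_image_eq_integral_abs_deriv_smul
    (f := fun u : ℝ => (u - 1) ^ 3 / (1 + (u - 1) ^ 3))
    (f' := fun u => 3 * (u - 1) ^ 2 / (1 + (u - 1) ^ 3) ^ 2) (s := Ioi 1) measurableSet_Ioi
    (fun u hu => by
      have hu0 : 0 < u - 1 := by linarith [mem_Ioi.1 hu]
      have h3 := ((hasDerivAt_id u).sub_const 1).pow 3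
      have := (h3.div (h3.const_add 1) (ne_of_gt (by simp only [id, Pi.pow_apply]; positivity))).hasDerivWithinAt (s := Ioi 1)
      convert! this using 1
      simp
      ring) hinj (fun x => x ^ (((m:ℝ) + 1) / 3 - 1) * (1 - x) ^ (b - 1))
  rw [himg, aux_beta _ _ (by positivity) hb] at key
  rw [key, eq_div_iff (by norm_num), mul_comm, ← integral_const_mul]
  refine setIntegral_congr_fun measurableSet_Ioi fun u hu => ?_
  have h0 : 0 < u - 1 := by linarith [mem_Ioi.1 hu]
  have h2 : 0 < 1 + (u - 1) ^ 3 := by positivity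
  have e0 : 1 - (u - 1) ^ 3 / (1 + (u - 1) ^ 3) = (1 + (u - 1) ^ 3)⁻¹ := by field_simp; ring
  have e2 : ((u - 1) ^ 3) ^ (((m:ℝ) + 1) / 3 - 1) = (u - 1) ^ m / (u - 1) ^ 2 := by
    rw [← rpow_natCast, ← rpow_mul h0.le, ← rpow_natCast, ← rpow_natCast, ← rpow_sub h0]
    congr 1; push_cast; ring
  have e3 : (1 + (u - 1) ^ 3) ^ (-(((m:ℝ) + 1) / 3 + b)) =
      ((1 + (u - 1) ^ 3) ^ 2)⁻¹ * ((1 + (u - 1) ^ 3) ^ (((m:ℝ) + 1) / 3 - 1))⁻¹ *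
        ((1 + (u - 1) ^ 3) ^ (b - 1))⁻¹ := by
    rw [← rpow_natCast (1 + (u - 1) ^ 3) 2, ← rpow_neg h2.le, ← rpow_neg h2.le, ← rpow_neg h2.le,
      ← rpow_add h2,
      ← rpow_add h2]
    congr 1; push_cast; ring
  simp only [smul_eq_mul]
  rw [e0, e3, div_rpow (by positivity) h2.le, e2, inv_rpow h2.le, abs_of_nonneg (by positivity)]
  have : (u - 1) ≠ 0 := h0.ne'
  field_simp

noncomputable def auxF (u : ℝ) : ℝ :=
  (u ^ 2 - 3 * u + 3) / (u + √3) ^ 2 / √(1 - (1 - u) ^ 3)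

lemma aux_pos (u : ℝ) (hu : 0 < u) : 0 < 1 - (1 - u) ^ 3 := by
  have : 1 - (1 - u) ^ 3 = u * ((u - 3 / 2) ^ 2 + 3 / 4) := by ring
  rw [this]; positivity

lemma aux_sub (φ : ℝ) (hφ : φ ∈ Ioo 0 π) :
    |2 * √3 * sin φ / (1 + cos φ) ^ 2| • auxF (√3 * (1 - cos φ) / (1 + cos φ)) =
      (√√3)⁻¹ * √(1 - ((√6 + √2) / 4) ^ 2 * sin φ ^ 2) := by
  have hs : 0 < sin φ := sin_pos_of_mem_Ioo hφ
  have hsc : sin φ ^ 2 = 1 - cos φ ^ 2 := by linarith [sin_sq_add_cos_sq φ]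
  have hc : 0 < (1 + cos φ) * (1 - cos φ) := by nlinarith
  have hc1 : 0 < 1 + cos φ := by
    have : 0 < 1 + cos φ ∧ 0 < 1 - cos φ ∨ 1 + cos φ < 0 ∧ 1 - cos φ < 0 := mul_pos_iff.1 hc
    rcases this with h | h
    · exact h.1
    · linarith
  have hc2 : 0 < 1 - cos φ := by nlinarith [neg_one_le_cos φ]
  have h3 : 0 < √3 := by positivity
  have h33 : √3 ^ 2 = 3 := sq_sqrt (by norm_num)
  have hk : ((√6 + √2) / 4) ^ 2 = (2 + √3) / 4 := by
    have h6 : √6 = √2 * √3 := by rw [← sqrt_mul (by norm_num)]; norm_num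
    have h2 : √2 ^ 2 = 2 := sq_sqrt (by norm_num)
    rw [h6]
    linear_combination (√3 ^ 2 + 2 * √3 + 1) / 16 * h2 + 1 / 8 * h33
  rw [hk]
  set u := √3 * (1 - cos φ) / (1 + cos φ) with hu
  have hu0 : 0 < u := by positivity
  have hP := aux_pos u hu0
  have hQ : 0 < u ^ 2 - 3 * u + 3 := by nlinarith [sq_nonneg (u - 3 / 2)]
  rw [smul_eq_mul, abs_of_pos (by positivity), auxF]
  have hw : 0 ≤ 1 - (2 + √3) / 4 * sin φ ^ 2 := by
    have : √3 ≤ 2 := by rw [sqrt_le_left (by norm_num)]; norm_num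
    nlinarith [sq_nonneg (cos φ)]
  rw [← sqrt_inv, ← sqrt_mul (by positivity)]
  symm
  rw [sqrt_eq_iff_mul_self_eq_of_pos (by positivity), ← sq, mul_pow, div_pow, div_pow, div_pow,
    sq_sqrt hP.le, mul_pow, hsc]
  have e1 : 1 - (1 - u) ^ 3 = u * (u ^ 2 - 3 * u + 3) := by ring
  have e2 : u + √3 = 2 * √3 / (1 + cos φ) := by rw [hu]; field_simp; ring
  have e3 : u ^ 2 - 3 * u + 3 = 3 * (2 + 2 * cos φ ^ 2 - √3 * (1 - cos φ ^ 2)) / (1 + cos φ) ^ 2 := by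
    rw [hu]; field_simp
    linear_combination (1 - cos φ) ^ 2 * h33
  rw [e1]
  have e4 : ((u ^ 2 - 3 * u + 3) ^ 2 / ((u + √3) ^ 2) ^ 2 / (u * (u ^ 2 - 3 * u + 3))) =
     (u ^ 2 - 3 * u + 3) / ((u + √3) ^ 2) ^ 2 / u := by field_simp
  rw [e4, e2, e3, hu]
  field_simp
  have h34 : √3 ^ 3 = 3 * √3 := by linear_combination √3 * h33
  ring_nf
  simp only [h33, h34]
  ring_nf

lemma aux_2E : ∫ φ in Ioo 0 π, √(1 - ((√6 + √2) / 4) ^ 2 * sin φ ^ 2) =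
    2 * ellipticE ((√6 + √2) / 4) := by
  rw [← integral_Ioc_eq_integral_Ioo, ← intervalIntegral.integral_of_le pi_pos.le, ellipticE]
  have hi : ∀ a b : ℝ, IntervalIntegrable (fun φ => √(1 - ((√6 + √2) / 4) ^ 2 * sin φ ^ 2)) volume a b :=
    fun a b => Continuous.intervalIntegrable (by fun_prop) a b
  rw [← intervalIntegral.integral_add_adjacent_intervals (hi 0 (π / 2)) (hi (π / 2) π), two_mul]
  congr 1
  have := intervalIntegral.integral_comp_sub_left (a := 0) (b := π / 2)
    (fun φ => √(1 - ((√6 + √2) / 4) ^ 2 * sin φ ^ 2)) π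
  simp only [sin_pi_sub, sub_zero] at this
  rw [this]
  congr 1
  ring

lemma aux_main1 : IntegrableOn auxF (Ioi 0) ∧
    2 * ellipticE ((√6 + √2) / 4) = √√3 * ∫ u in Ioi 0, auxF u := by
  have h3 : 0 < √3 := by positivity
  have hcp : ∀ φ ∈ Ioo 0 π, 0 < 1 + cos φ := fun φ hφ => by
    have := cos_lt_cos_of_nonneg_of_le_pi hφ.1.le le_rfl hφ.2
    rw [cos_pi] at this; linarith
  have hcm : ∀ φ ∈ Ioo 0 π, 0 < 1 - cos φ := fun φ hφ => by
    have := cos_lt_cos_of_nonneg_of_le_pi le_rfl hφ.2.le hφ.1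
    rw [cos_zero] at this; linarith
  have himg : (fun φ : ℝ => √3 * (1 - cos φ) / (1 + cos φ)) '' Ioo 0 π = Ioi 0 := by
    ext y
    constructor
    · rintro ⟨φ, hφ, rfl⟩
      have := hcp φ hφ
      have := hcm φ hφ
      exact mem_Ioi.2 (by positivity)
    · intro hy
      have hy : 0 < y := hy
      have hl : -1 < (√3 - y) / (√3 + y) := by rw [lt_div_iff₀ (by positivity)]; linarith
      have hr : (√3 - y) / (√3 + y) < 1 := by rw [div_lt_one (by positivity)]; linarith
      refine ⟨arccos ((√3 - y) / (√3 + y)), ⟨arccos_pos.2 hr, ?_⟩, ?_⟩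
      · refine lt_of_le_of_ne (arccos_le_pi _) fun h => ?_
        rw [arccos_eq_pi] at h; linarith
      · simp only []
        rw [cos_arccos hl.le hr.le]
        field_simp
        ring
  have hinj : InjOn (fun φ : ℝ => √3 * (1 - cos φ) / (1 + cos φ)) (Ioo 0 π) := by
    intro u hu v hv h
    have hu1 := hcp u hu
    have hv1 := hcp v hv
    simp only [] at h
    rw [div_eq_div_iff hu1.ne' hv1.ne'] at h
    refine injOn_cos ⟨hu.1.le, hu.2.le⟩ ⟨hv.1.le, hv.2.le⟩ ?_
    have : √3 * (2 * (cos u - cos v)) = 0 := by linarith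
    have := (mul_eq_zero.1 this).resolve_left h3.ne'
    linarith
  have hder : ∀ φ ∈ Ioo 0 π, HasDerivWithinAt (fun φ : ℝ => √3 * (1 - cos φ) / (1 + cos φ))
      (2 * √3 * sin φ / (1 + cos φ) ^ 2) (Ioo 0 π) φ := by
    intro φ hφ
    have := ((((hasDerivAt_cos φ).const_sub 1).const_mul √3).div
      ((hasDerivAt_cos φ).const_add 1) (hcp φ hφ).ne').hasDerivWithinAt (s := Ioo 0 π)
    convert! this using 1
    ring
  constructor
  · rw [← himg, integrableOn_image_iff_integrableOn_abs_deriv_smul measurableSet_Ioo hder hinj,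
      integrableOn_congr_fun aux_sub measurableSet_Ioo]
    have : Continuous (fun φ => (√√3)⁻¹ * √(1 - ((√6 + √2) / 4) ^ 2 * sin φ ^ 2)) := by fun_prop
    exact (this.integrableOn_Icc (a := 0) (b := π)).mono_set Ioo_subset_Icc_self
  · rw [← himg, integral_image_eq_integral_abs_deriv_smul measurableSet_Ioo hder hinj,
      setIntegral_congr_fun measurableSet_Ioo aux_sub, integral_const_mul, aux_2E]
    have : √√3 ≠ 0 := by positivity
    field_simp

lemma aux_derivP (u : ℝ) (hu : 0 < u) :
    HasDerivAt (fun u : ℝ => √(1 - (1 - u) ^ 3)) (3 * (1 - u) ^ 2 / (2 * √(1 - (1 - u) ^ 3))) u := by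
  have h := ((((hasDerivAt_id u).const_sub 1).pow 3).const_sub 1).sqrt (aux_pos u hu).ne'
  convert! h using 1
  simp

lemma aux_deriv1 (u : ℝ) (hu : 0 < u) :
    HasDerivAt (fun u : ℝ => √3 / 3 * (√(1 - (1 - u) ^ 3) / (u + √3)))
      (auxF u - (1 / 2 - √3 / 6) * ((1 - u) ^ 0 / √(1 - (1 - u) ^ 3))
        - √3 / 6 * ((1 - u) ^ 1 / √(1 - (1 - u) ^ 3))) u := by
  have h3 : 0 < √3 := by positivity
  have h33 : √3 ^ 2 = 3 := sq_sqrt (by norm_num)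
  have hP := aux_pos u hu
  have h := ((aux_derivP u hu).div ((hasDerivAt_id u).add_const √3)
    (by simp only [id]; positivity)).const_mul (√3 / 3)
  convert! h using 1
  have hy : 0 < √(1 - (1 - u) ^ 3) := sqrt_pos.2 hP
  have hy2 : √(1 - (1 - u) ^ 3) ^ 2 = 1 - (1 - u) ^ 3 := sq_sqrt hP.le
  simp only [auxF, id]
  set y := √(1 - (1 - u) ^ 3)
  set s := √3
  have : u + s ≠ 0 := by positivity
  field_simp
  rw [hy2]
  have h333 : s ^ 3 = 3 * s := by linear_combination s * h33
  ring_nf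
  simp only [h33, h333]
  ring_nf

lemma aux_deriv2 (u : ℝ) (hu : 0 < u) :
    HasDerivAt (fun u : ℝ => √3 / 3 * (√(1 - (1 - u) ^ 3) / (u + √3)) -
        √3 / 3 * ((u - 1) ^ 2 / √(1 - (1 - u) ^ 3)))
      (auxF u - (1 / 2 - √3 / 6) * (1 / √(1 - (1 - u) ^ 3))
        - √3 / 2 * ((u - 1) / √(1 - (1 - u) ^ 3) ^ 3)) u := by
  have hP := aux_pos u hu
  have hy : 0 < √(1 - (1 - u) ^ 3) := sqrt_pos.2 hP
  have hy2 : √(1 - (1 - u) ^ 3) ^ 2 = 1 - (1 - u) ^ 3 := sq_sqrt hP.le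
  have h := (aux_deriv1 u hu).sub
    (((((hasDerivAt_id u).sub_const 1).pow 2).div (aux_derivP u hu) hy.ne').const_mul (√3 / 3))
  convert! h using 1
  simp only [id, Pi.pow_apply]
  set y := √(1 - (1 - u) ^ 3)
  set s := √3
  field_simp
  ring_nf
  simp only [hy2]
  ring_nf

lemma aux_I1 (hF : IntegrableOn auxF (Ioi 0)) :
    ∫ u in Ioo 0 1, auxF u = (1 / 2 - √3 / 6) * (beta (1 / 3) (1 / 2) / 3) +
      √3 / 6 * (beta (2 / 3) (1 / 2) / 3) + √3 / 3 * (1 / (1 + √3)) := by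
  have b1 := aux_L1 0
  have b2 := aux_L1 1
  norm_num only [Nat.cast_zero, Nat.cast_one] at b1 b2
  have p1 : 0 < beta (1 / 3) (1 / 2) := beta_pos (by norm_num) (by norm_num)
  have p2 : 0 < beta (2 / 3) (1 / 2) := beta_pos (by norm_num) (by norm_num)
  have hF1 : IntegrableOn auxF (Ioo 0 1) := hF.mono_set Ioo_subset_Ioi_self
  have i1 : IntegrableOn (fun u : ℝ => (1 - u) ^ 0 / √(1 - (1 - u) ^ 3)) (Ioo 0 1) :=
    not_imp_comm.1 integral_undef (by rw [b1]; positivity)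
  have i2 : IntegrableOn (fun u : ℝ => (1 - u) ^ 1 / √(1 - (1 - u) ^ 3)) (Ioo 0 1) :=
    not_imp_comm.1 integral_undef (by rw [b2]; positivity)
  have iA := hF1.sub (i1.const_mul (1 / 2 - √3 / 6))
  have iD := iA.sub (i2.const_mul (√3 / 6))
  have ftc := intervalIntegral.integral_eq_sub_of_hasDerivAt_of_le (a := 0) (b := 1) zero_le_one
    (f := fun u : ℝ => √3 / 3 * (√(1 - (1 - u) ^ 3) / (u + √3))) (by
      refine ContinuousOn.mul continuousOn_const (ContinuousOn.div (by fun_prop) (by fun_prop) ?_)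
      intro u hu
      have : 0 ≤ u := hu.1
      positivity) (fun u hu => aux_deriv1 u hu.1)
    ((intervalIntegrable_iff_integrableOn_Ioo_of_le zero_le_one).2 iD)
  rw [intervalIntegral.integral_of_le zero_le_one, integral_Ioc_eq_integral_Ioo] at ftc
  have e := integral_sub iA (i2.const_mul (√3 / 6))
  have e' := integral_sub hF1 (i1.const_mul (1 / 2 - √3 / 6))
  simp only [Pi.sub_apply] at e e'
  rw [e, e', integral_const_mul, integral_const_mul, b1, b2] at ftc
  norm_num at ftc
  norm_num
  linarith

lemma aux_tendsto : Tendsto (fun u : ℝ => √3 / 3 * (√(1 - (1 - u) ^ 3) / (u + √3)) -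
        √3 / 3 * ((u - 1) ^ 2 / √(1 - (1 - u) ^ 3))) atTop (𝓝 0) := by
  have key : Tendsto (fun u : ℝ => √(1 - (1 - u) ^ 3) / (u + √3) -
        (u - 1) ^ 2 / √(1 - (1 - u) ^ 3)) atTop (𝓝 0) := by
    have hb : Tendsto (fun u : ℝ => (1 + √3) * (√(u + -1))⁻¹) atTop (𝓝 0) := by
      have : Tendsto (fun u : ℝ => (√(u + -1))⁻¹) atTop (𝓝 0) :=
        tendsto_inv_atTop_zero.comp
          (tendsto_sqrt_atTop.comp (tendsto_atTop_add_const_right _ (-1) tendsto_id))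
      simpa using this.const_mul (1 + √3)
    refine squeeze_zero_norm' ?_ hb
    filter_upwards [eventually_ge_atTop 2] with u hu
    have hP := aux_pos u (by linarith)
    have hy : 0 < √(1 - (1 - u) ^ 3) := sqrt_pos.2 hP
    have hy2 : √(1 - (1 - u) ^ 3) ^ 2 = 1 - (1 - u) ^ 3 := sq_sqrt hP.le
    have hw : 0 < u + -1 := by linarith
    have hle : √(u + -1) * (u + -1) ≤ √(1 - (1 - u) ^ 3) := by
      apply le_sqrt_of_sq_le
      rw [mul_pow, sq_sqrt hw.le]
      nlinarith
    have hz : 0 < √(u + -1) := sqrt_pos.2 hw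
    set y := √(1 - (1 - u) ^ 3)
    set z := √(u + -1)
    have h3 : 0 < √3 := by positivity
    set s := √3
    have hus : 0 < u + s := by linarith
    have e : y / (u + s) - (u - 1) ^ 2 / y = -(((1 + s) * (u + -1) ^ 2 - 1) / (y * (u + s))) := by
      field_simp
      rw [hy2]; ring
    have hnum : 0 ≤ (1 + s) * (u + -1) ^ 2 - 1 := by nlinarith [mul_pos h3 (pow_pos hw 2)]
    rw [e, norm_neg, norm_of_nonneg (by positivity), ← div_eq_mul_inv,
      div_le_div_iff₀ (by positivity) hz]
    have h1 : ((1 + s) * (u + -1) ^ 2 - 1) * z ≤ (1 + s) * (u + -1) * (z * (u + -1)) := by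
      nlinarith
    have h2 : (1 + s) * (u + -1) * (z * (u + -1)) ≤ (1 + s) * (u + -1) * y := by gcongr
    have h4 : (1 + s) * (u + -1) * y ≤ (1 + s) * (u + s) * y := by gcongr; linarith
    linarith
  have := key.const_mul (√3 / 3)
  simpa [mul_sub] using this

lemma aux_I2 (hF : IntegrableOn auxF (Ioi 0)) :
    ∫ u in Ioi 1, auxF u = (1 / 2 - √3 / 6) * (beta (1 / 3) (1 / 6) / 3) +
      √3 / 2 * (beta (2 / 3) (5 / 6) / 3) - √3 / 3 * (1 / (1 + √3)) := by
  have b1 : ∫ u in Ioi (1:ℝ), 1 / √(1 - (1 - u) ^ 3) = beta (1 / 3) (1 / 6) / 3 := by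
    have := aux_L2 0 (1 / 6) (by norm_num)
    norm_num only [Nat.cast_zero] at this
    rw [← this]
    refine setIntegral_congr_fun measurableSet_Ioi fun u hu => ?_
    have hP := aux_pos u (by linarith [mem_Ioi.1 hu])
    have e : 1 + (u - 1) ^ 3 = 1 - (1 - u) ^ 3 := by ring
    try beta_reduce
    rw [e, sqrt_eq_rpow, rpow_neg hP.le]
    simp
  have b2 : ∫ u in Ioi (1:ℝ), (u - 1) / √(1 - (1 - u) ^ 3) ^ 3 = beta (2 / 3) (5 / 6) / 3 := by
    have := aux_L2 1 (5 / 6) (by norm_num)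
    norm_num only [Nat.cast_one] at this
    rw [← this]
    refine setIntegral_congr_fun measurableSet_Ioi fun u hu => ?_
    have hP := aux_pos u (by linarith [mem_Ioi.1 hu])
    have e : 1 + (u - 1) ^ 3 = 1 - (1 - u) ^ 3 := by ring
    try beta_reduce
    rw [e, sqrt_eq_rpow, rpow_neg hP.le, ← rpow_natCast (_ ^ ((1:ℝ)/2)), ← rpow_mul hP.le]
    norm_num
    rfl
  have p1 : 0 < beta (1 / 3) (1 / 6) := beta_pos (by norm_num) (by norm_num)
  have p2 : 0 < beta (2 / 3) (5 / 6) := beta_pos (by norm_num) (by norm_num)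
  have hF1 : IntegrableOn auxF (Ioi 1) := hF.mono_set (Ioi_subset_Ioi zero_le_one)
  have i1 : IntegrableOn (fun u : ℝ => 1 / √(1 - (1 - u) ^ 3)) (Ioi 1) :=
    not_imp_comm.1 integral_undef (by rw [b1]; positivity)
  have i2 : IntegrableOn (fun u : ℝ => (u - 1) / √(1 - (1 - u) ^ 3) ^ 3) (Ioi 1) :=
    not_imp_comm.1 integral_undef (by rw [b2]; positivity)
  have iA := hF1.sub (i1.const_mul (1 / 2 - √3 / 6))
  have iD := iA.sub (i2.const_mul (√3 / 2))
  have ftc := integral_Ioi_of_hasDerivAt_of_tendsto' (a := 1)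
    (fun u hu => aux_deriv2 u (by linarith [mem_Ici.1 hu])) iD aux_tendsto
  have e := integral_sub iA (i2.const_mul (√3 / 2))
  have e' := integral_sub hF1 (i1.const_mul (1 / 2 - √3 / 6))
  simp only [Pi.sub_apply] at e e'
  rw [e, e', integral_const_mul, integral_const_mul, b1, b2] at ftc
  norm_num at ftc
  norm_num
  linarith

lemma aux_E : 2 * ellipticE ((√6 + √2) / 4) = √√3 * (
    (1 / 2 - √3 / 6) * ((beta (1 / 3) (1 / 2) + beta (1 / 3) (1 / 6)) / 3) +
      √3 / 6 * (beta (2 / 3) (1 / 2) / 3) + √3 / 2 * (beta (2 / 3) (5 / 6) / 3)) := by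
  obtain ⟨hF, h⟩ := aux_main1
  rw [h, ← Ioc_union_Ioi_eq_Ioi (zero_le_one (α := ℝ)),
    setIntegral_union (Ioc_disjoint_Ioi le_rfl) measurableSet_Ioi
      (hF.mono_set Ioc_subset_Ioi_self) (hF.mono_set (Ioi_subset_Ioi zero_le_one)),
    integral_Ioc_eq_integral_Ioo, aux_I1 hF, aux_I2 hF]
  ring

theorem ellipticE_singular_value_plus :
    ellipticE ((Real.sqrt 6 + Real.sqrt 2) / 4) =
      (2:ℝ) ^ ((1:ℝ)/3) * (3:ℝ) ^ (-(1:ℝ)/4) * π ^ 2 * (Real.Gamma (1/3)) ^ (-(3:ℤ)) +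
      (2:ℝ) ^ (-(10:ℝ)/3) * (3:ℝ) ^ ((1:ℝ)/4) * π⁻¹ * (Real.sqrt 3 - 1) * Real.Gamma (1/3) ^ 3 := by
  have hE := aux_E
  have g1 := Real.Gamma_mul_Gamma_one_sub (1 / 3)
  have g2 := Real.Gamma_mul_Gamma_add_half (1 / 3)
  have g3 := Real.Gamma_mul_Gamma_add_half (1 / 6)
  have g4 := Real.Gamma_add_one (s := 1 / 6) (by norm_num)
  have g5 := Real.Gamma_add_one (s := 1 / 2) (by norm_num)
  rw [show π * (1 / 3) = π / 3 by ring, sin_pi_div_three] at g1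
  have r1 : (2:ℝ) ^ ((2:ℝ) / 3) = ((2:ℝ) ^ ((1:ℝ) / 3)) ^ 2 := by
    rw [← rpow_natCast, ← rpow_mul (by norm_num)]; norm_num
  have r2 : ((2:ℝ) ^ ((1:ℝ) / 3)) ^ 3 = 2 := by
    rw [← rpow_natCast, ← rpow_mul (by norm_num)]; norm_num
  have r3 : (2:ℝ) ^ (-(10:ℝ) / 3) = (((2:ℝ) ^ ((1:ℝ) / 3)) ^ 10)⁻¹ := by
    rw [← rpow_natCast, ← rpow_mul (by norm_num), ← rpow_neg (by norm_num)]; norm_num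
  have q1 : (3:ℝ) ^ (-(1:ℝ) / 4) = ((3:ℝ) ^ ((1:ℝ) / 4))⁻¹ := by
    rw [← rpow_neg (by norm_num)]; norm_num
  have q2 : √3 = ((3:ℝ) ^ ((1:ℝ) / 4)) ^ 2 := by
    rw [← rpow_natCast, ← rpow_mul (by norm_num), sqrt_eq_rpow]; norm_num
  have hq : 0 < (3:ℝ) ^ ((1:ℝ) / 4) := by positivity
  have q3 : √√3 = (3:ℝ) ^ ((1:ℝ) / 4) := by rw [q2, sqrt_sq hq.le]
  have q4 : ((3:ℝ) ^ ((1:ℝ) / 4)) ^ 4 = 3 := by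
    rw [← rpow_natCast, ← rpow_mul (by norm_num)]; norm_num
  have hr : 0 < (2:ℝ) ^ ((1:ℝ) / 3) := by positivity
  have hG : 0 < Gamma (1 / 3) := Gamma_pos_of_pos (by norm_num)
  have hG2 : 0 < Gamma (2 / 3) := Gamma_pos_of_pos (by norm_num)
  have hp : 0 < √π := sqrt_pos.2 pi_pos
  have hp2 : π = √π ^ 2 := (sq_sqrt pi_pos.le).symm
  simp only [beta] at hE
  norm_num only at g1 g2 g3 g4 g5 hE
  rw [Gamma_one_half_eq] at g5 hE
  rw [r1] at g3
  rw [r3, q1]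
  rw [g4, g5, q3] at hE
  rw [q2] at hE g1 ⊢
  set q := (3:ℝ) ^ ((1:ℝ) / 4)
  set r := (2:ℝ) ^ ((1:ℝ) / 3)
  set G := Gamma (1 / 3)
  set G2 := Gamma (2 / 3)
  have r10 : r ^ 10 = 8 * r := by
    linear_combination (r ^ 7 + 2 * r ^ 4 + 4 * r) * r2
  have e2 : G2 = 2 * π / (q ^ 2 * G) := by
    rw [eq_div_iff (by positivity)]
    field_simp at g1
    linarith
  have e5 : Gamma (5 / 6) = G2 * r * √π / G := by
    rw [eq_div_iff hG.ne', mul_comm]; exact g2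
  have e6 : Gamma (1 / 6) = G * r ^ 2 * √π / G2 := by
    rw [eq_div_iff hG2.ne']; exact g3
  rw [e5, e6, e2] at hE
  rw [r10, zpow_neg]
  have hE' : ellipticE ((√6 + √2) / 4) = _ / 2 := (eq_div_iff two_ne_zero).2 ((mul_comm _ _).trans hE)
  rw [hE']
  norm_cast
  rw [hp2]
  generalize √π = p at *
  clear_value q r G
  field_simp
  linear_combination (8 * q ^ 4 * (6 - 2 * q ^ 2) * G ^ 6 * r - 384 * p ^ 6) * r2
    - 48 * q ^ 2 * G ^ 6 * r * q4
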